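/- Let θ ∈ ℝ with cos θ ≠ 1 and cos θ ≠ −1, and let j, j' ∈ {0, 1}. Then the normalized overlap of the two-component cat states of amplitudes r·e^{iθ} and r tends to zero at large energy: ⟨c_j(r·e^{iθ}), c_{j'}(r)⟩ / (‖c_j(r·e^{iθ})‖ · ‖c_{j'}(r)‖) → 0 as the real parameter r → +∞ (the denominators being nonzero for r > 0). -/

import Mathlib

open scoped ComplexConjugate ComplexInnerProductSpace

noncomputable section

/-- The coefficient sequence of the coherent state `|α⟩`:
`n ↦ exp(−|α|²/2)·αⁿ/√(n!)`. -/
def coh (α : ℂ) : ℕ → ℂ :=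
  fun n => Complex.exp (-((‖α‖ : ℂ)) ^ 2 / 2) * α ^ n / (Real.sqrt n.factorial : ℂ)

/-- The coefficient sequence of the unnormalized two-component cat state
`c_k(γ) = |γ⟩ + (−1)^k |−γ⟩`. -/
def catf (k : ℕ) (γ : ℂ) : ℕ → ℂ :=
  fun n => coh γ n + (-1 : ℂ) ^ k * coh (-γ) n

/-!
Coherent states satisfy `|⟨α|β⟩| = exp (-|α - β|² / 2)`. Expanding two cat states, their inner
product is at most `2 * (exp (-|α - β|² / 2) + exp (-|α + β|² / 2))`, while
`‖c_k(γ)‖² = 2 + 2 * (-1) ^ k * exp (-2 * |γ|²)` is bounded below away from `γ = 0`. Hence the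
normalized overlap vanishes as soon as `α`, `β`, `α - β` and `α + β` all escape to infinity, which
along two rays `r * a` and `r * b` means `a ≠ 0`, `b ≠ 0` and `a ≠ ±b`.
-/

open Filter Bornology
open scoped lp Topology

section CoherentStates

theorem inner_coh_apply (α β : ℂ) (n : ℕ) :
    ⟪coh α n, coh β n⟫ =
      Complex.exp (-‖α‖ ^ 2 / 2 - ‖β‖ ^ 2 / 2) * ((conj α * β) ^ n / n.factorial) := by
  have sqrt_mul_sqrt :
      (Real.sqrt n.factorial : ℂ) * (Real.sqrt n.factorial : ℂ) = n.factorial := by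
    rw [← Complex.ofReal_mul, Real.mul_self_sqrt n.factorial.cast_nonneg, Complex.ofReal_natCast]
  have conj_gaussian :
      conj (Complex.exp (-(‖α‖ : ℂ) ^ 2 / 2)) = Complex.exp (-(‖α‖ : ℂ) ^ 2 / 2) := by
    simp [← Complex.exp_conj, map_ofNat]
  have exp_split : Complex.exp (-‖α‖ ^ 2 / 2 - ‖β‖ ^ 2 / 2) =
      Complex.exp (-(‖α‖ : ℂ) ^ 2 / 2) * Complex.exp (-(‖β‖ : ℂ) ^ 2 / 2) := by
    rw [← Complex.exp_add]
    ring_nf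
  rw [exp_split, ← sqrt_mul_sqrt]
  simp only [coh, RCLike.inner_apply, map_mul, map_div₀, map_pow, conj_gaussian,
    Complex.conj_ofReal, mul_pow]
  ring

theorem hasSum_inner_coh (α β : ℂ) :
    HasSum (fun n => ⟪coh α n, coh β n⟫)
      (Complex.exp (-‖α‖ ^ 2 / 2 - ‖β‖ ^ 2 / 2 + conj α * β)) := by
  simp only [inner_coh_apply]
  rw [Complex.exp_add, Complex.exp_eq_exp_ℂ]
  exact (NormedSpace.expSeries_div_hasSum_exp (conj α * β)).mul_left _

theorem memℓp_coh (α : ℂ) : Memℓp (coh α) 2 := by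
  refine memℓp_gen ((hasSum_inner_coh α α).summable.norm.congr fun n => ?_)
  simp [inner_self_eq_norm_sq_to_K]

/-- The coherent state `|α⟩` as a vector of `ℓ²(ℕ, ℂ)`, so that inner products and norms of
coherent states can be formed. -/
def cohState (α : ℂ) : ℓ²(ℕ, ℂ) := ⟨coh α, memℓp_coh α⟩

theorem inner_cohState (α β : ℂ) :
    ⟪cohState α, cohState β⟫ = Complex.exp (-‖α‖ ^ 2 / 2 - ‖β‖ ^ 2 / 2 + conj α * β) :=
  (lp.hasSum_inner (cohState α) (cohState β)).unique (hasSum_inner_coh α β)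

theorem norm_inner_cohState (α β : ℂ) :
    ‖⟪cohState α, cohState β⟫‖ = Real.exp (-‖α - β‖ ^ 2 / 2) := by
  have norm_sub_sq_expand : ‖α - β‖ ^ 2 = ‖α‖ ^ 2 - 2 * (conj α * β).re + ‖β‖ ^ 2 := by
    rw [norm_sub_sq (𝕜 := ℂ), RCLike.inner_apply, mul_comm β, RCLike.re_eq_complex_re]
  have exponent_re : (-‖α‖ ^ 2 / 2 - ‖β‖ ^ 2 / 2 + conj α * β : ℂ).re =
      -‖α‖ ^ 2 / 2 - ‖β‖ ^ 2 / 2 + (conj α * β).re := by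
    rw [Complex.add_re, ← Complex.ofReal_re (-‖α‖ ^ 2 / 2 - ‖β‖ ^ 2 / 2)]
    push_cast
    rfl
  rw [inner_cohState, Complex.norm_exp, exponent_re, norm_sub_sq_expand]
  ring_nf

theorem inner_cohState_neg_self (γ : ℂ) :
    ⟪cohState γ, cohState (-γ)⟫ = (Real.exp (-2 * ‖γ‖ ^ 2) : ℂ) := by
  rw [inner_cohState, mul_neg, Complex.conj_mul', norm_neg]
  push_cast
  ring_nf

theorem norm_cohState (α : ℂ) : ‖cohState α‖ = 1 := by
  have norm_sq : ‖cohState α‖ ^ 2 = 1 := by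
    simpa [inner_self_eq_norm_sq_to_K] using norm_inner_cohState α α
  exact (pow_eq_one_iff_of_nonneg (norm_nonneg _) two_ne_zero).1 norm_sq

end CoherentStates

section CatStates

theorem memℓp_catf (k : ℕ) (γ : ℂ) : Memℓp (catf k γ) 2 :=
  (memℓp_coh γ).add ((memℓp_coh (-γ)).const_smul ((-1 : ℂ) ^ k))

/-- The unnormalized cat state `c_k(γ)` as a vector of `ℓ²(ℕ, ℂ)`, in which overlaps are taken. The
index `k` ranges over `ℕ`, only its parity being relevant. -/
def catState (k : ℕ) (γ : ℂ) : ℓ²(ℕ, ℂ) := ⟨catf k γ, memℓp_catf k γ⟩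

theorem catState_eq_cohState_add (k : ℕ) (γ : ℂ) :
    catState k γ = cohState γ + (-1 : ℂ) ^ k • cohState (-γ) :=
  rfl

theorem norm_sq_catState (k : ℕ) (γ : ℂ) :
    ‖catState k γ‖ ^ 2 = 2 + 2 * (-1) ^ k * Real.exp (-2 * ‖γ‖ ^ 2) := by
  have cross_term_re : (⟪cohState γ, (-1 : ℂ) ^ k • cohState (-γ)⟫).re =
      (-1) ^ k * Real.exp (-2 * ‖γ‖ ^ 2) := by
    rw [inner_smul_right, inner_cohState_neg_self]
    exact_mod_cast Complex.ofReal_re _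
  rw [catState_eq_cohState_add, norm_add_sq (𝕜 := ℂ), RCLike.re_eq_complex_re, cross_term_re,
    norm_smul, norm_cohState, norm_cohState, norm_pow, norm_neg, norm_one]
  ring

theorem two_sub_le_norm_sq_catState (k : ℕ) (γ : ℂ) :
    2 - 2 * Real.exp (-2 * ‖γ‖ ^ 2) ≤ ‖catState k γ‖ ^ 2 := by
  rw [norm_sq_catState]
  rcases neg_one_pow_eq_or ℝ k with hk | hk <;> rw [hk] <;>
    linarith [Real.exp_pos (-2 * ‖γ‖ ^ 2)]

theorem norm_catState_ne_zero (k : ℕ) {γ : ℂ} (hγ : γ ≠ 0) : ‖catState k γ‖ ≠ 0 := by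
  have exp_lt_one : Real.exp (-2 * ‖γ‖ ^ 2) < 1 :=
    Real.exp_lt_one_iff.2 (by linarith [pow_pos (norm_pos_iff.2 hγ) 2])
  intro norm_eq_zero
  have lower_bound := two_sub_le_norm_sq_catState k γ
  rw [norm_eq_zero] at lower_bound
  linarith

theorem one_le_norm_catState (k : ℕ) {γ : ℂ} (hγ : 1 ≤ ‖γ‖) : 1 ≤ ‖catState k γ‖ := by
  have exp_le_half : Real.exp (-2 * ‖γ‖ ^ 2) ≤ 1 / 2 := by
    have two_le_exp : 2 ≤ Real.exp (2 * ‖γ‖ ^ 2) := by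
      linarith [Real.add_one_le_exp (2 * ‖γ‖ ^ 2), one_le_pow₀ hγ (n := 2)]
    rw [neg_mul, Real.exp_neg, ← one_div]
    exact one_div_le_one_div_of_le two_pos two_le_exp
  rw [← one_le_sq_iff₀ (norm_nonneg _)]
  linarith [two_sub_le_norm_sq_catState k γ]

theorem norm_inner_catState_le (j k : ℕ) (α β : ℂ) :
    ‖⟪catState j α, catState k β⟫‖ ≤
      2 * (Real.exp (-‖α - β‖ ^ 2 / 2) + Real.exp (-‖α + β‖ ^ 2 / 2)) := by
  have norm_neg_add : ‖-α + β‖ = ‖α - β‖ := by rw [← norm_neg, neg_add', neg_neg]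
  have norm_neg_sub : ‖-α - β‖ = ‖α + β‖ := by rw [← neg_add', norm_neg]
  simp only [catState_eq_cohState_add, inner_add_left, inner_add_right, inner_smul_left,
    inner_smul_right, mul_add]
  refine (norm_add_le _ _).trans
    ((add_le_add (norm_add_le _ _) (norm_add_le _ _)).trans_eq ?_)
  simp only [norm_mul, norm_inner_cohState, norm_neg_add, norm_neg_sub, sub_neg_eq_add,
    map_pow, map_neg, map_one, norm_pow, norm_neg, norm_one, one_pow, one_mul]
  ring

end CatStates

section Limits

theorem tendsto_exp_neg_norm_sq_div_two_cobounded {E : Type*} [SeminormedAddGroup E] :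
    Tendsto (fun x : E => Real.exp (-‖x‖ ^ 2 / 2)) (cobounded E) (𝓝 0) := by
  have sq_div_two_atTop : Tendsto (fun x : E => ‖x‖ ^ 2 / 2) (cobounded E) atTop :=
    ((tendsto_pow_atTop two_ne_zero).comp tendsto_norm_cobounded_atTop).atTop_div_const two_pos
  simpa only [Function.comp_def, neg_div] using
    Real.tendsto_exp_neg_atTop_nhds_zero.comp sq_div_two_atTop

theorem tendsto_inner_catState_div_norm_mul_norm {ι : Type*} {l : Filter ι} {α β : ι → ℂ}
    (hα : Tendsto α l (cobounded ℂ)) (hβ : Tendsto β l (cobounded ℂ))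
    (hsub : Tendsto (fun i => α i - β i) l (cobounded ℂ))
    (hadd : Tendsto (fun i => α i + β i) l (cobounded ℂ)) (j k : ℕ) :
    Tendsto (fun i => ⟪catState j (α i), catState k (β i)⟫ /
      ((‖catState j (α i)‖ : ℂ) * (‖catState k (β i)‖ : ℂ))) l (𝓝 0) := by
  have bound_tendsto : Tendsto (fun i => 2 * (Real.exp (-‖α i - β i‖ ^ 2 / 2) +
      Real.exp (-‖α i + β i‖ ^ 2 / 2))) l (𝓝 0) := by
    simpa using ((tendsto_exp_neg_norm_sq_div_two_cobounded.comp hsub).add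
      (tendsto_exp_neg_norm_sq_div_two_cobounded.comp hadd)).const_mul 2
  refine squeeze_zero_norm' ?_ bound_tendsto
  filter_upwards [(tendsto_norm_cobounded_atTop.comp hα).eventually_ge_atTop 1,
    (tendsto_norm_cobounded_atTop.comp hβ).eventually_ge_atTop 1] with i one_le_α one_le_β
  have one_le_norms : 1 ≤ ‖catState j (α i)‖ * ‖catState k (β i)‖ :=
    one_le_mul_of_one_le_of_one_le (one_le_norm_catState j one_le_α)
      (one_le_norm_catState k one_le_β)
  calc ‖⟪catState j (α i), catState k (β i)⟫ /
        ((‖catState j (α i)‖ : ℂ) * (‖catState k (β i)‖ : ℂ))‖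
      = ‖⟪catState j (α i), catState k (β i)⟫‖ /
          (‖catState j (α i)‖ * ‖catState k (β i)‖) := by
        simp only [norm_div, norm_mul, Complex.norm_real, norm_norm]
    _ ≤ ‖⟪catState j (α i), catState k (β i)⟫‖ := div_le_self (norm_nonneg _) one_le_norms
    _ ≤ _ := norm_inner_catState_le j k (α i) (β i)

theorem tendsto_ofReal_mul_const_cobounded {𝕜 : Type*} [RCLike 𝕜] {c : 𝕜} (hc : c ≠ 0) :
    Tendsto (fun r : ℝ => (r : 𝕜) * c) atTop (cobounded 𝕜) :=
  (tendsto_mul_right_cobounded hc).comp (RCLike.tendsto_ofReal_atTop_cobounded 𝕜)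

theorem cat_overlap_tendsto_zero_general {a b : ℂ} (ha : a ≠ 0) (hb : b ≠ 0) (hab : a ≠ b)
    (hab_neg : a ≠ -b) (j k : ℕ) :
    (∀ r : ℝ, 0 < r → ‖catState j (r * a)‖ ≠ 0 ∧ ‖catState k (r * b)‖ ≠ 0) ∧
      Tendsto (fun r : ℝ => ⟪catState j (r * a), catState k (r * b)⟫ /
        ((‖catState j (r * a)‖ : ℂ) * (‖catState k (r * b)‖ : ℂ))) atTop (𝓝 0) := by
  refine ⟨fun r hr => ?_, tendsto_inner_catState_div_norm_mul_norm
    (tendsto_ofReal_mul_const_cobounded ha) (tendsto_ofReal_mul_const_cobounded hb) ?_ ?_ j k⟩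
  · have hr_ne : (r : ℂ) ≠ 0 := Complex.ofReal_ne_zero.2 hr.ne'
    exact ⟨norm_catState_ne_zero j (mul_ne_zero hr_ne ha),
      norm_catState_ne_zero k (mul_ne_zero hr_ne hb)⟩
  · simpa only [mul_sub] using tendsto_ofReal_mul_const_cobounded (sub_ne_zero.2 hab)
  · have add_ne_zero : a + b ≠ 0 := mt eq_neg_of_add_eq_zero_left hab_neg
    simpa only [mul_add] using tendsto_ofReal_mul_const_cobounded add_ne_zero

end Limits

theorem exp_ofReal_mul_I_ne_ofReal {θ x : ℝ} (h : Real.cos θ ≠ x) :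
    Complex.exp (θ * Complex.I) ≠ x := fun heq =>
  h (by rw [← Complex.exp_ofReal_mul_I_re, heq, Complex.ofReal_re])

/-- For `cos θ ≠ ±1`, the normalized overlap of the cat states of amplitudes `r·e^{iθ}` and `r`
tends to `0` as `r → +∞`, the norms in the denominator being nonzero for `r > 0`. -/
theorem cat_overlap_tendsto_zero (θ : ℝ) (h1 : Real.cos θ ≠ 1) (h2 : Real.cos θ ≠ -1)
    (j j' : Fin 2) :
    ∃ h : ∀ (k : ℕ) (γ : ℂ), Memℓp (catf k γ) 2,
      (∀ r : ℝ, 0 < r →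
        ‖(⟨catf j ((r : ℂ) * Complex.exp (θ * Complex.I)),
            h j ((r : ℂ) * Complex.exp (θ * Complex.I))⟩ : lp (fun _ : ℕ => ℂ) 2)‖ ≠ 0 ∧
        ‖(⟨catf j' (r : ℂ), h j' (r : ℂ)⟩ : lp (fun _ : ℕ => ℂ) 2)‖ ≠ 0) ∧
      Filter.Tendsto (fun r : ℝ =>
          (⟪(⟨catf j ((r : ℂ) * Complex.exp (θ * Complex.I)),
              h j ((r : ℂ) * Complex.exp (θ * Complex.I))⟩ : lp (fun _ : ℕ => ℂ) 2),
            (⟨catf j' (r : ℂ), h j' (r : ℂ)⟩ : lp (fun _ : ℕ => ℂ) 2)⟫ : ℂ) /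
          ((‖(⟨catf j ((r : ℂ) * Complex.exp (θ * Complex.I)),
              h j ((r : ℂ) * Complex.exp (θ * Complex.I))⟩ : lp (fun _ : ℕ => ℂ) 2)‖ : ℂ) *
           (‖(⟨catf j' (r : ℂ), h j' (r : ℂ)⟩ : lp (fun _ : ℕ => ℂ) 2)‖ : ℂ)))
        Filter.atTop (nhds 0) := by
  have exp_ne_one : Complex.exp (θ * Complex.I) ≠ 1 := by
    simpa only [Complex.ofReal_one] using exp_ofReal_mul_I_ne_ofReal h1
  have exp_ne_neg_one : Complex.exp (θ * Complex.I) ≠ -1 := by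
    simpa only [Complex.ofReal_neg, Complex.ofReal_one] using exp_ofReal_mul_I_ne_ofReal h2
  have overlap := cat_overlap_tendsto_zero_general (Complex.exp_ne_zero (θ * Complex.I))
    one_ne_zero exp_ne_one exp_ne_neg_one j j'
  simp only [mul_one] at overlap
  exact ⟨memℓp_catf, overlap⟩

end
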